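/- Let P be a polynomial with integer coefficients, let q ≥ 1 and u be integers, and let f: ℝ → ℂ be of class 𝒟 with Fourier coefficients c_k = ∫₀¹ f(ξ)·e(−kξ) dξ. Then for every real x, lim_{K→∞} Σ_{|k|≤K} c_k·e((u/q)·P(k) + x·k) = (1/q)·Σ_{v=0}^{q−1} G(u,v;q)·f(x + v/q), where G(u,v;q) = Σ_{w=0}^{q−1} e((u·P(w) − v·w)/q). -/

import Mathlib

open Filter Finset MeasureTheory

/-- `e(ξ) = exp(2πiξ)`. -/
noncomputable def ee (ξ : ℝ) : ℂ := Complex.exp (2 * Real.pi * Complex.I * ξ)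

/-- A function `f : ℝ → ℂ` is of class `𝒟` if it is `1`-periodic, piecewise
continuously differentiable, and equals the average of its one-sided limits everywhere. -/
def ClassD (f : ℝ → ℂ) : Prop :=
  Function.Periodic f 1 ∧
  (∃ (r : ℕ) (x : ℕ → ℝ), 0 < r ∧ x 0 = 0 ∧ x r = 1 ∧
    (∀ j < r, x j < x (j + 1)) ∧
    (∀ j < r, ∃ g : ℝ → ℂ, ContDiffOn ℝ 1 g (Set.Icc (x j) (x (j + 1))) ∧
      Set.EqOn f g (Set.Ioo (x j) (x (j + 1))))) ∧
  (∀ x : ℝ, ∃ a b : ℂ, Tendsto f (nhdsWithin x (Set.Ioi x)) (nhds a) ∧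
    Tendsto f (nhdsWithin x (Set.Iio x)) (nhds b) ∧ f x = (a + b) / 2)

/-!
Finite Fourier inversion writes the `q`-periodic sequence `e(uP(k)/q)` as
`(1/q) ∑ᵥ G(u,v;q) e(vk/q)`. This turns the partial sums at `x` into a combination of ordinary
symmetric Fourier partial sums of `f` at the points `y = x + v/q`, and it remains to see that the
latter converge to `f y`. Up to the factor `1/2`, their difference from `f y` is a partial sum of
the Fourier coefficients of the even function `F(t) = f(y+t) + f(y-t) - 2f(y)`. Since `f` lies in
`𝒟`, `F(t) = O(t)`, so `g = F/(e-1)` is integrable. As `F = (e-1)g`, the coefficients of `F` are the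
differences `ĝ(k-1) - ĝ(k)`, the partial sums telescope to `ĝ(-K-1) - ĝ(K)`, and the
Riemann–Lebesgue lemma makes these tend to `0`.
-/

open Asymptotics
open scoped Topology

section ExponentialCharacter

theorem ee_eq_fourierChar (ξ : ℝ) : ee ξ = Real.fourierChar ξ := by
  rw [ee, Real.fourierChar_apply]
  push_cast
  ring_nf

theorem ee_add (a b : ℝ) : ee (a + b) = ee a * ee b := by
  simp only [ee_eq_fourierChar, AddChar.map_add_eq_mul, Circle.coe_mul]

theorem ee_eq_one_iff {a : ℝ} : ee a = 1 ↔ ∃ n : ℤ, a = n := by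
  have h2π : (2 * Real.pi * Complex.I : ℂ) ≠ 0 := Complex.two_pi_I_ne_zero
  simp only [ee, Complex.exp_eq_one_iff, mul_comm _ (2 * Real.pi * Complex.I : ℂ),
    mul_right_inj' h2π]
  norm_cast

theorem ee_intCast (n : ℤ) : ee n = 1 :=
  ee_eq_one_iff.mpr ⟨n, rfl⟩

theorem ee_zero : ee 0 = 1 := mod_cast ee_intCast 0

theorem ee_ne_one_of_abs_lt_one {a : ℝ} (ha : a ≠ 0) (ha' : |a| < 1) : ee a ≠ 1 := by
  rw [Ne, ee_eq_one_iff]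
  rintro ⟨n, rfl⟩
  norm_cast at ha ha'
  exact ha (Int.abs_lt_one_iff.mp ha')

theorem periodic_ee_intCast_mul (k : ℤ) : Function.Periodic (fun ξ => ee (k * ξ)) 1 := fun ξ => by
  simp only [mul_add, mul_one, ee_add, ee_intCast]

theorem periodic_ee : Function.Periodic ee 1 := by
  simpa using periodic_ee_intCast_mul 1

theorem hasDerivAt_ee (ξ : ℝ) : HasDerivAt ee (2 * Real.pi * Complex.I * ee ξ) ξ :=
  ((hasDerivAt_id (ξ : ℂ)).const_mul (2 * Real.pi * Complex.I)).cexp.comp_ofReal.congr_deriv <| by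
    rw [ee, id_eq, mul_one, mul_comm]

theorem continuous_ee : Continuous ee :=
  continuous_iff_continuousAt.mpr fun ξ => (hasDerivAt_ee ξ).continuousAt

theorem isBigO_ee_sub_one_inv : (fun t => (ee t - 1)⁻¹) =O[𝓝 0] fun t : ℝ => (t : ℂ)⁻¹ := by
  have hderiv : (2 * Real.pi * Complex.I * ee 0 : ℂ) ≠ 0 := by
    rw [ee_zero, mul_one]
    exact Complex.two_pi_I_ne_zero
  have hO : (fun t : ℝ => (t : ℂ)) =O[𝓝 0] fun t => ee t - 1 := by
    refine Complex.isBigO_ofReal_left.mpr ?_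
    simpa [ee_zero, Function.comp_def] using
      ((hasDerivAt_ee 0).isTheta_sub hderiv).isBigO_symm
  refine hO.inv_rev (.of_forall fun t ht => ?_)
  rw [Complex.ofReal_eq_zero.mp ht, ee_zero, sub_self]

theorem ee_mul_sub_mul_div (u m v w : ℤ) (q : ℕ) :
    ee (((u * m - v * w : ℤ) : ℝ) / q) = ee (u / q * m) * ee (-(v * w / q)) := by
  rw [← ee_add]
  push_cast
  ring_nf

end ExponentialCharacter

section FourierCoefficients

/-- The `k`-th Fourier coefficient of a function of period `1`. Unlike `fourierCoeff`, it takes a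
function on `ℝ` rather than on the circle. -/
noncomputable def unitFourierCoeff (f : ℝ → ℂ) (k : ℤ) : ℂ :=
  ∫ ξ in (0 : ℝ)..(1 : ℝ), f ξ * ee (-(k : ℝ) * ξ)

variable {f g : ℝ → ℂ}

theorem intervalIntegrable_mul_ee {a b : ℝ} (hf : IntervalIntegrable f volume a b) (c : ℝ) :
    IntervalIntegrable (fun ξ => f ξ * ee (c * ξ)) volume a b :=
  hf.mul_continuousOn (continuous_ee.comp (continuous_const_mul c)).continuousOn

theorem unitFourierCoeff_add (hf : IntervalIntegrable f volume 0 1)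
    (hg : IntervalIntegrable g volume 0 1) (k : ℤ) :
    unitFourierCoeff (fun ξ => f ξ + g ξ) k = unitFourierCoeff f k + unitFourierCoeff g k := by
  simp only [unitFourierCoeff, add_mul]
  exact intervalIntegral.integral_add (intervalIntegrable_mul_ee hf _)
    (intervalIntegrable_mul_ee hg _)

theorem unitFourierCoeff_sub (hf : IntervalIntegrable f volume 0 1)
    (hg : IntervalIntegrable g volume 0 1) (k : ℤ) :
    unitFourierCoeff (fun ξ => f ξ - g ξ) k = unitFourierCoeff f k - unitFourierCoeff g k := by
  simp only [unitFourierCoeff, sub_mul]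
  exact intervalIntegral.integral_sub (intervalIntegrable_mul_ee hf _)
    (intervalIntegrable_mul_ee hg _)

theorem unitFourierCoeff_const (c : ℂ) (k : ℤ) :
    unitFourierCoeff (fun _ => c) k = if k = 0 then c else 0 := by
  rw [unitFourierCoeff, intervalIntegral.integral_const_mul]
  split_ifs with hk
  · simp [hk, ee_zero]
  · have hexponent : (2 * Real.pi * Complex.I * (-k : ℂ)) ≠ 0 :=
      mul_ne_zero Complex.two_pi_I_ne_zero (neg_ne_zero.mpr (Int.cast_ne_zero.mpr hk))
    have hee (ξ : ℝ) :
        ee (-(k : ℝ) * ξ) = Complex.exp (2 * Real.pi * Complex.I * (-k : ℂ) * ξ) := by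
      rw [ee]
      push_cast
      ring_nf
    have hend : ee (-(k : ℝ) * 1) = 1 := by
      simpa using ee_intCast (-k)
    simp only [hee] at hend ⊢
    rw [integral_exp_mul_complex hexponent, hend]
    simp

theorem periodic_mul_ee (hf : Function.Periodic f 1) (k : ℤ) :
    Function.Periodic (fun ξ => f ξ * ee (-(k : ℝ) * ξ)) 1 := by
  exact_mod_cast hf.mul (periodic_ee_intCast_mul (-k))

theorem unitFourierCoeff_comp_const_add (hf : Function.Periodic f 1) (y : ℝ) (k : ℤ) :
    unitFourierCoeff (fun t => f (y + t)) k = unitFourierCoeff f k * ee (y * k) := by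
  have htwist (t : ℝ) :
      f (y + t) * ee (-(k : ℝ) * t) = f (y + t) * ee (-(k : ℝ) * (y + t)) * ee (y * k) := by
    rw [mul_assoc, ← ee_add]
    ring_nf
  simp only [unitFourierCoeff, htwist]
  rw [intervalIntegral.integral_mul_const,
    intervalIntegral.integral_comp_add_left (fun ξ => f ξ * ee (-(k : ℝ) * ξ)), add_zero,
    (periodic_mul_ee hf k).intervalIntegral_add_eq y 0, zero_add]

theorem unitFourierCoeff_comp_neg (hf : Function.Periodic f 1) (k : ℤ) :
    unitFourierCoeff (fun t => f (-t)) k = unitFourierCoeff f (-k) := by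
  have hreflect (t : ℝ) :
      f (-t) * ee (-(k : ℝ) * t) = f (-t) * ee (-((-k : ℤ) : ℝ) * -t) := by
    push_cast
    ring_nf
  simp only [unitFourierCoeff, hreflect]
  rw [intervalIntegral.integral_comp_neg (fun ξ => f ξ * ee (-((-k : ℤ) : ℝ) * ξ)), neg_zero]
  simpa using (periodic_mul_ee hf (-k)).intervalIntegral_add_eq (-1) 0

theorem unitFourierCoeff_mul_ee_sub_one (hg : IntervalIntegrable g volume 0 1) (k : ℤ) :
    unitFourierCoeff (fun t => g t * (ee t - 1)) k =
      unitFourierCoeff g (k - 1) - unitFourierCoeff g k := by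
  simp only [unitFourierCoeff]
  rw [← intervalIntegral.integral_sub (intervalIntegrable_mul_ee hg _)
    (intervalIntegrable_mul_ee hg _)]
  refine intervalIntegral.integral_congr fun t _ => ?_
  have hshift : ee (-((k - 1 : ℤ) : ℝ) * t) = ee t * ee (-(k : ℝ) * t) := by
    rw [← ee_add]
    push_cast
    ring_nf
  rw [hshift]
  ring

theorem tendsto_unitFourierCoeff_cofinite (g : ℝ → ℂ) :
    Tendsto (unitFourierCoeff g) cofinite (𝓝 0) := by
  refine ((Real.tendsto_integral_exp_smul_cocompact
    ((Set.Ioc 0 1).indicator g)).comp Int.tendsto_coe_cofinite).congr fun k => ?_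
  rw [unitFourierCoeff, intervalIntegral.integral_of_le zero_le_one,
    ← integral_indicator measurableSet_Ioc]
  refine integral_congr_ae (.of_forall fun t => ?_)
  by_cases ht : t ∈ Set.Ioc (0 : ℝ) 1
  · simp only [Set.indicator_of_mem ht, Circle.smul_def, smul_eq_mul, ← ee_eq_fourierChar]
    rw [mul_comm, neg_mul, mul_comm t]
  · simp only [Set.indicator_of_notMem ht, smul_zero]

end FourierCoefficients

section IntervalIntegrable

variable {E : Type*} [NormedAddCommGroup E] {f : ℝ → E}

theorem locallyIntegrable_of_intervalIntegrable
    (hf : ∀ a b : ℝ, IntervalIntegrable f volume a b) : LocallyIntegrable f := fun s =>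
  ⟨Set.Ioc (s - 1) (s + 1), Ioc_mem_nhds (sub_one_lt s) (lt_add_one s), (hf _ _).1⟩

theorem intervalIntegrable_comp_const_add (hf : ∀ a b : ℝ, IntervalIntegrable f volume a b)
    (y a b : ℝ) : IntervalIntegrable (fun t => f (y + t)) volume a b := by
  simpa using (hf (y + a) (y + b)).comp_add_left y

theorem intervalIntegrable_comp_const_sub (hf : ∀ a b : ℝ, IntervalIntegrable f volume a b)
    (y a b : ℝ) : IntervalIntegrable (fun t => f (y - t)) volume a b := by
  simpa using (hf (y - a) (y - b)).comp_sub_left y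

end IntervalIntegrable

section DiniTest

theorem sum_Icc_int_sub_pred {M : Type*} [AddCommGroup M] (G : ℤ → M) (K : ℕ) :
    ∑ k ∈ Icc (-(K : ℤ)) K, (G (k - 1) - G k) = G (-(K : ℤ) - 1) - G K := by
  rw [sum_Icc_eq_sum_Ico_add _ (by omega)]
  have htelescope := sum_Ico_int_sub K fun k => G (k - 1)
  simp only [add_sub_cancel_right] at htelescope
  rw [htelescope, sub_add_sub_cancel]

theorem sum_Icc_comp_neg {M : Type*} [AddCommMonoid M] (a : ℤ → M) (K : ℕ) :
    ∑ k ∈ Icc (-(K : ℤ)) K, a (-k) = ∑ k ∈ Icc (-(K : ℤ)) K, a k :=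
  sum_equiv (Equiv.neg ℤ) (fun k => by simp only [mem_Icc, Equiv.neg_apply]; omega) fun _ _ => rfl

theorem tendsto_sum_unitFourierCoeff_zero {F : ℝ → ℂ}
    (hF : IntervalIntegrable (fun t => F t / (ee t - 1)) volume 0 1) :
    Tendsto (fun K : ℕ => ∑ k ∈ Icc (-(K : ℤ)) K, unitFourierCoeff F k) atTop (𝓝 0) := by
  set g : ℝ → ℂ := fun t => F t / (ee t - 1)
  have hcoeff (k : ℤ) :
      unitFourierCoeff F k = unitFourierCoeff g (k - 1) - unitFourierCoeff g k := by
    rw [← unitFourierCoeff_mul_ee_sub_one hF]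
    refine intervalIntegral.integral_congr_Ioo_of_le zero_le_one fun t ht => ?_
    have hne : ee t ≠ 1 :=
      ee_ne_one_of_abs_lt_one ht.1.ne' (abs_lt.mpr ⟨by linarith [ht.1], ht.2⟩)
    simp only [g, div_mul_cancel₀ _ (sub_ne_zero.mpr hne)]
  simp only [hcoeff, sum_Icc_int_sub_pred]
  have hRL (φ : ℕ → ℤ) (hφ : Function.Injective φ) :
      Tendsto (fun K => unitFourierCoeff g (φ K)) atTop (𝓝 0) :=
    (tendsto_unitFourierCoeff_cofinite g).comp (Nat.cofinite_eq_atTop ▸ hφ.tendsto_cofinite)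
  simpa only [sub_zero] using
    (hRL (fun K => -(K : ℤ) - 1) fun _ _ h => by simpa using h).sub (hRL _ Nat.cast_injective)

/-- The symmetric second difference of `f` at `y` with step `t`, which measures how far the mean of
`f (y + t)` and `f (y - t)` is from `f y`. -/
def secondDiff (f : ℝ → ℂ) (y t : ℝ) : ℂ := f (y + t) + f (y - t) - 2 * f y

/-- Dini's condition for `f` at `y`, under which the Fourier series of `f` at `y` sums to `f y`.
The quotient takes the value `0` at `t = 0`, which does not affect integrability. -/
def DiniAt (f : ℝ → ℂ) (y : ℝ) : Prop :=
  IntegrableAtFilter (fun t : ℝ => secondDiff f y t / t) (𝓝 0)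

variable {f : ℝ → ℂ} {y : ℝ}

theorem secondDiff_zero (f : ℝ → ℂ) (y : ℝ) : secondDiff f y 0 = 0 := by
  rw [secondDiff, add_zero, sub_zero, two_mul, sub_self]

theorem secondDiff_neg (f : ℝ → ℂ) (y t : ℝ) : secondDiff f y (-t) = secondDiff f y t := by
  rw [secondDiff, secondDiff, sub_neg_eq_add, ← sub_eq_add_neg, add_comm (f (y - t))]

theorem periodic_secondDiff (hf : Function.Periodic f 1) (y : ℝ) :
    Function.Periodic (secondDiff f y) 1 := fun t => by
  rw [secondDiff, secondDiff, ← add_assoc, hf, ← sub_sub, hf.sub_eq]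

theorem intervalIntegrable_secondDiff (hf : ∀ a b : ℝ, IntervalIntegrable f volume a b)
    (y a b : ℝ) : IntervalIntegrable (secondDiff f y) volume a b :=
  ((intervalIntegrable_comp_const_add hf y a b).add
    (intervalIntegrable_comp_const_sub hf y a b)).sub intervalIntegrable_const

theorem locallyIntegrable_secondDiff (hf : ∀ a b : ℝ, IntervalIntegrable f volume a b) (y : ℝ) :
    LocallyIntegrable (secondDiff f y) :=
  locallyIntegrable_of_intervalIntegrable (intervalIntegrable_secondDiff hf y)

theorem aestronglyMeasurable_secondDiff_div (hf : ∀ a b : ℝ, IntervalIntegrable f volume a b)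
    (y : ℝ) {g : ℝ → ℂ} (hg : Continuous g) :
    AEStronglyMeasurable fun t => secondDiff f y t / g t :=
  ((locallyIntegrable_secondDiff hf y).aestronglyMeasurable.aemeasurable.div
    hg.aemeasurable).aestronglyMeasurable

theorem DiniAt.of_isBigO (hf : ∀ a b : ℝ, IntervalIntegrable f volume a b)
    (h : secondDiff f y =O[𝓝 0] fun t : ℝ => t) : DiniAt f y := by
  have hbounded : (fun t : ℝ => secondDiff f y t / t) =O[𝓝 0] fun _ => (1 : ℝ) := by
    obtain ⟨C, hC, hle⟩ := h.exists_nonneg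
    refine .of_bound C (hle.bound.mono fun t ht => ?_)
    rw [norm_div, Complex.norm_real, norm_one, mul_one]
    exact div_le_of_le_mul₀ (norm_nonneg t) hC ht
  exact hbounded.integrableAtFilter
    (aestronglyMeasurable_secondDiff_div hf y Complex.continuous_ofReal).stronglyMeasurableAtFilter
    (locallyIntegrable_const 1 0)

theorem DiniAt.intervalIntegrable_div_ee_sub_one (hp : Function.Periodic f 1)
    (hf : ∀ a b : ℝ, IntervalIntegrable f volume a b) (h : DiniAt f y) :
    IntervalIntegrable (fun t => secondDiff f y t / (ee t - 1)) volume 0 1 := by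
  have hmeas : AEStronglyMeasurable fun t => secondDiff f y t / (ee t - 1) :=
    aestronglyMeasurable_secondDiff_div hf y (continuous_ee.sub continuous_const)
  have hquot : LocallyIntegrableOn (fun t => secondDiff f y t / (ee t - 1))
      (Set.Icc (-(1 / 2)) (1 / 2)) := by
    intro s hs
    refine IntegrableAtFilter.filter_mono nhdsWithin_le_nhds ?_
    rcases eq_or_ne s 0 with rfl | hs0
    · exact ((isBigO_refl _ _).mul isBigO_ee_sub_one_inv).integrableAtFilter
        hmeas.stronglyMeasurableAtFilter h
    · have hne : ee s - 1 ≠ 0 := sub_ne_zero.mpr <|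
        ee_ne_one_of_abs_lt_one hs0 ((abs_le.mpr hs).trans_lt one_half_lt_one)
      have hinv : (fun t => (ee t - 1)⁻¹) =O[𝓝 s] fun _ => (1 : ℂ) :=
        ((continuous_ee.continuousAt.sub continuousAt_const).inv₀ hne).tendsto.isBigO_one ℂ
      have hO : (fun t => secondDiff f y t / (ee t - 1)) =O[𝓝 s] secondDiff f y := by
        simpa only [div_eq_mul_inv, mul_one] using (isBigO_refl (secondDiff f y) _).mul hinv
      exact hO.integrableAtFilter hmeas.stronglyMeasurableAtFilter
        (locallyIntegrable_secondDiff hf y s)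
  have hperiodic : Function.Periodic (fun t => secondDiff f y t / (ee t - 1)) 1 := fun t => by
    simp only [periodic_secondDiff hp y t, periodic_ee t]
  refine hperiodic.intervalIntegrable one_ne_zero (t := -(1 / 2)) ?_ 0 1
  rw [show (-(1 / 2) + 1 : ℝ) = 1 / 2 by norm_num,
    intervalIntegrable_iff_integrableOn_Icc_of_le (by norm_num)]
  exact hquot.integrableOn_isCompact isCompact_Icc

theorem unitFourierCoeff_secondDiff (hp : Function.Periodic f 1)
    (hf : ∀ a b : ℝ, IntervalIntegrable f volume a b) (y : ℝ) (k : ℤ) :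
    unitFourierCoeff (secondDiff f y) k =
      unitFourierCoeff f k * ee (y * k) + unitFourierCoeff f (-k) * ee (y * (-k : ℤ)) -
        if k = 0 then 2 * f y else 0 := by
  have hleft : unitFourierCoeff (fun t => f (y - t)) k =
      unitFourierCoeff f (-k) * ee (y * (-k : ℤ)) := by
    rw [← unitFourierCoeff_comp_const_add hp]
    exact unitFourierCoeff_comp_neg (hp.const_add y) k
  have hr := intervalIntegrable_comp_const_add hf y 0 1
  have hl := intervalIntegrable_comp_const_sub hf y 0 1
  rw [← unitFourierCoeff_comp_const_add hp, ← hleft, ← unitFourierCoeff_const,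
    ← unitFourierCoeff_add hr hl, ← unitFourierCoeff_sub (hr.add hl) intervalIntegrable_const]
  rfl

theorem DiniAt.tendsto_sum_unitFourierCoeff (hp : Function.Periodic f 1)
    (hf : ∀ a b : ℝ, IntervalIntegrable f volume a b) (h : DiniAt f y) :
    Tendsto (fun K : ℕ => ∑ k ∈ Icc (-(K : ℤ)) K, unitFourierCoeff f k * ee (y * k)) atTop
      (𝓝 (f y)) := by
  have hsum (K : ℕ) : ∑ k ∈ Icc (-(K : ℤ)) K, unitFourierCoeff f k * ee (y * k) =
      f y + (∑ k ∈ Icc (-(K : ℤ)) K, unitFourierCoeff (secondDiff f y) k) / 2 := by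
    simp only [unitFourierCoeff_secondDiff hp hf, sum_sub_distrib, sum_add_distrib]
    rw [sum_Icc_comp_neg fun k => unitFourierCoeff f k * ee (y * k), sum_ite_eq', if_pos (by simp)]
    ring
  simp only [hsum]
  simpa using ((tendsto_sum_unitFourierCoeff_zero
    (h.intervalIntegrable_div_ee_sub_one hp hf)).div_const 2).const_add (f y)

end DiniTest

section PiecewiseSmooth

theorem exists_lt_not_and_succ {p : ℕ → Prop} {r : ℕ} (h₀ : ¬p 0) (hr : p r) :
    ∃ j < r, ¬p j ∧ p (j + 1) := by
  induction r with
  | zero => exact absurd hr h₀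
  | succ r ih =>
    by_cases hpr : p r
    · obtain ⟨j, hj, hpj⟩ := ih hpr
      exact ⟨j, hj.trans r.lt_succ_self, hpj⟩
    · exact ⟨r, r.lt_succ_self, hpr, hr⟩

theorem tendsto_const_add_nhdsGT_zero (z : ℝ) : Tendsto (fun t => z + t) (𝓝[>] 0) (𝓝[>] z) :=
  tendsto_nhdsWithin_iff.mpr
    ⟨((continuous_const_add z).tendsto' 0 z (add_zero z)).mono_left nhdsWithin_le_nhds,
      eventually_mem_nhdsWithin.mono fun _ => lt_add_of_pos_right z⟩

theorem tendsto_const_sub_nhdsGT_zero (z : ℝ) : Tendsto (fun t => z - t) (𝓝[>] 0) (𝓝[<] z) :=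
  tendsto_nhdsWithin_iff.mpr
    ⟨((continuous_sub_left z).tendsto' 0 z (sub_zero z)).mono_left nhdsWithin_le_nhds,
      eventually_mem_nhdsWithin.mono fun _ => sub_lt_self z⟩

section IsBigO

variable {E : Type*} [NormedAddCommGroup E]

theorem isBigO_nhds_zero_of_even {F : ℝ → E} (heven : F.Even) (hzero : F 0 = 0)
    (hF : F =O[𝓝[>] 0] fun t : ℝ => t) : F =O[𝓝 0] fun t : ℝ => t := by
  have hleft : F =O[𝓝[<] 0] fun t : ℝ => t := by
    have htendsto : Tendsto (fun t : ℝ => -t) (𝓝[<] 0) (𝓝[>] 0) := by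
      simpa using tendsto_neg_nhdsLT (a := (0 : ℝ))
    exact (hF.comp_tendsto htendsto).neg_right.congr heven neg_neg
  rw [← nhdsNE_sup_pure, ← nhdsLT_sup_nhdsGT]
  exact (hleft.sup hF).sup (isBigO_pure.mpr fun _ => hzero)

theorem isBigO_sub_of_tendsto {F : ℝ → E} {l : Filter ℝ} [l.NeBot] (hl : l ≤ 𝓝 0) {a c : E}
    (hF : (fun t => F t - c) =O[l] fun t : ℝ => t) (ha : Tendsto F l (𝓝 a)) :
    (fun t => F t - a) =O[l] fun t : ℝ => t := by
  have hc : Tendsto F l (𝓝 c) :=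
    tendsto_sub_nhds_zero_iff.mp (hF.trans_tendsto (tendsto_id.mono_left hl))
  rwa [tendsto_nhds_unique ha hc]

theorem isBigO_sub_of_eqOn [NormedSpace ℝ E] {f g : ℝ → E} {s : Set ℝ} {z : ℝ}
    (hg : DifferentiableWithinAt ℝ g s z) (hfg : Set.EqOn f g s) :
    (fun t => f t - g z) =O[𝓝[s] z] fun t => t - z := by
  refine hg.isBigO_sub.congr' ?_ .rfl
  filter_upwards [self_mem_nhdsWithin] with t ht
  rw [hfg ht]

end IsBigO

variable {f : ℝ → ℂ}

theorem ClassD.exists_isBigO_const_add_sub (hf : ClassD f) (y : ℝ) :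
    ∃ c, (fun t => f (y + t) - c) =O[𝓝[>] 0] fun t : ℝ => t := by
  obtain ⟨hp, ⟨r, x, -, hx0, hxr, -, hpieces⟩, -⟩ := hf
  have hz := toIcoMod_mem_Ico (zero_lt_one' ℝ) 0 y
  have hfz (t : ℝ) : f (y + t) = f (toIcoMod zero_lt_one 0 y + t) := by
    rw [toIcoMod, sub_add_eq_add_sub, hp.sub_zsmul_eq]
  set z := toIcoMod (zero_lt_one' ℝ) 0 y
  rw [zero_add] at hz
  obtain ⟨j, hj, hjz, hzj⟩ : ∃ j < r, ¬z < x j ∧ z < x (j + 1) :=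
    exists_lt_not_and_succ (p := fun j => z < x j) (by simpa [hx0] using hz.1)
      (by simpa [hxr] using hz.2)
  obtain ⟨g, hg, hfg⟩ := hpieces j hj
  have hdiff : DifferentiableWithinAt ℝ g (Set.Ioo (x j) (x (j + 1))) z :=
    (hg.differentiableOn one_ne_zero z ⟨not_lt.mp hjz, hzj.le⟩).mono Set.Ioo_subset_Icc_self
  have htendsto : Tendsto (fun t => z + t) (𝓝[>] 0) (𝓝[Set.Ioo (x j) (x (j + 1))] z) :=
    (tendsto_const_add_nhdsGT_zero z).mono_right <|
      nhdsWithin_le_of_mem (Ioo_mem_nhdsGT_of_mem ⟨not_lt.mp hjz, hzj⟩)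
  refine ⟨g z, ?_⟩
  simpa [hfz, Function.comp_def] using
    (isBigO_sub_of_eqOn hdiff hfg).comp_tendsto htendsto

theorem ClassD.exists_isBigO_const_sub_sub (hf : ClassD f) (y : ℝ) :
    ∃ c, (fun t => f (y - t) - c) =O[𝓝[>] 0] fun t : ℝ => t := by
  obtain ⟨hp, ⟨r, x, -, hx0, hxr, -, hpieces⟩, -⟩ := hf
  have hz := toIocMod_mem_Ioc (zero_lt_one' ℝ) 0 y
  have hfz (t : ℝ) : f (y - t) = f (toIocMod zero_lt_one 0 y - t) := by
    rw [toIocMod, sub_right_comm, hp.sub_zsmul_eq]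
  set z := toIocMod (zero_lt_one' ℝ) 0 y
  rw [zero_add] at hz
  obtain ⟨j, hj, hjz, hzj⟩ : ∃ j < r, ¬z ≤ x j ∧ z ≤ x (j + 1) :=
    exists_lt_not_and_succ (p := fun j => z ≤ x j) (by simpa [hx0] using hz.1)
      (by simpa [hxr] using hz.2)
  obtain ⟨g, hg, hfg⟩ := hpieces j hj
  have hdiff : DifferentiableWithinAt ℝ g (Set.Ioo (x j) (x (j + 1))) z :=
    (hg.differentiableOn one_ne_zero z ⟨(not_le.mp hjz).le, hzj⟩).mono Set.Ioo_subset_Icc_self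
  have htendsto : Tendsto (fun t => z - t) (𝓝[>] 0) (𝓝[Set.Ioo (x j) (x (j + 1))] z) :=
    (tendsto_const_sub_nhdsGT_zero z).mono_right <|
      nhdsWithin_le_of_mem (Ioo_mem_nhdsLT_of_mem ⟨not_le.mp hjz, hzj⟩)
  refine ⟨g z, ?_⟩
  refine isBigO_neg_right.mp ?_
  simpa [hfz, Function.comp_def] using
    (isBigO_sub_of_eqOn hdiff hfg).comp_tendsto htendsto

theorem ClassD.isBigO_secondDiff (hf : ClassD f) (y : ℝ) :
    secondDiff f y =O[𝓝 0] fun t : ℝ => t := by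
  obtain ⟨a, b, ha, hb, hfy⟩ := hf.2.2 y
  obtain ⟨c, hc⟩ := hf.exists_isBigO_const_add_sub y
  obtain ⟨d, hd⟩ := hf.exists_isBigO_const_sub_sub y
  refine isBigO_nhds_zero_of_even (secondDiff_neg f y) (secondDiff_zero f y) ?_
  have hright := isBigO_sub_of_tendsto nhdsWithin_le_nhds hc
    (ha.comp (tendsto_const_add_nhdsGT_zero y))
  have hleft := isBigO_sub_of_tendsto nhdsWithin_le_nhds hd
    (hb.comp (tendsto_const_sub_nhdsGT_zero y))
  refine (hright.add hleft).congr_left fun t => ?_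
  rw [secondDiff, hfy]
  ring

theorem ClassD.intervalIntegrable (hf : ClassD f) : IntervalIntegrable f volume 0 1 := by
  obtain ⟨-, ⟨r, x, -, hx0, hxr, hlt, hpieces⟩, -⟩ := hf
  rw [← hx0, ← hxr]
  refine IntervalIntegrable.trans_iterate fun j hj => ?_
  obtain ⟨g, hg, hfg⟩ := hpieces j hj
  have hle := (hlt j hj).le
  rw [intervalIntegrable_iff_integrableOn_Ioo_of_le hle]
  exact (hg.continuousOn.integrableOn_Icc.mono_set Set.Ioo_subset_Icc_self).congr_fun hfg.symm
    measurableSet_Ioo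

theorem ClassD.diniAt (hf : ClassD f) (y : ℝ) : DiniAt f y :=
  .of_isBigO (hf.1.intervalIntegrable₀ one_ne_zero hf.intervalIntegrable) (hf.isBigO_secondDiff y)

end PiecewiseSmooth

section PeriodicSequences

open scoped ZMod

theorem sum_zmod_eq_sum_range {M : Type*} [AddCommMonoid M] (q : ℕ) [NeZero q] (F : ℕ → M) :
    ∑ v : ZMod q, F v.val = ∑ v ∈ range q, F v := by
  refine sum_bij (fun v _ => v.val) (fun v _ => mem_range.mpr v.val_lt)
    (fun _ _ _ _ h => ZMod.val_injective q h)
    (fun v hv => ⟨v, mem_univ _, ZMod.val_cast_of_lt (mem_range.mp hv)⟩) fun _ _ => rfl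

theorem stdAddChar_mul_intCast {q : ℕ} [NeZero q] (v : ZMod q) (m : ℤ) :
    ZMod.stdAddChar (v * (m : ZMod q)) = ee (v.val * m / q) := by
  have hcast : v * (m : ZMod q) = ((v.val * m : ℤ) : ZMod q) := by
    push_cast
    rw [ZMod.natCast_zmod_val]
  rw [hcast, ZMod.stdAddChar_coe, ee]
  push_cast
  ring_nf

theorem dft_eq_sum_range {q : ℕ} [NeZero q] (a : ℤ → ℂ) (v : ZMod q) :
    𝓕 (fun w : ZMod q => a w.val) v = ∑ w ∈ range q, a w * ee (-(v.val * w / q)) := by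
  rw [ZMod.dft_apply, ← sum_zmod_eq_sum_range]
  refine sum_congr rfl fun w _ => ?_
  have hphase : -(w * v) = v * ((-w.val : ℤ) : ZMod q) := by
    push_cast
    rw [ZMod.natCast_zmod_val, mul_neg, mul_comm]
  rw [hphase, stdAddChar_mul_intCast, smul_eq_mul, mul_comm]
  push_cast
  ring_nf

theorem eq_sum_range_ee_of_periodic {a : ℤ → ℂ} {q : ℕ} [NeZero q]
    (ha : Function.Periodic a q) (k : ℤ) :
    a k = (q : ℂ)⁻¹ * ∑ v ∈ range q,
      (∑ w ∈ range q, a w * ee (-(v * w / q))) * ee (v * k / q) := by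
  have hk : a (k : ZMod q).val = a k := by
    rw [ZMod.val_intCast, Int.emod_def, mul_comm]
    simpa using ha.sub_int_mul_eq (k / q)
  have hinv := congrFun (ZMod.dft.symm_apply_apply fun w : ZMod q => a w.val) k
  rw [← hk, ← hinv, ZMod.invDFT_apply, smul_eq_mul, ← sum_zmod_eq_sum_range]
  simp only [dft_eq_sum_range, stdAddChar_mul_intCast, smul_eq_mul, mul_comm (ee _)]

theorem periodic_ee_polynomial_eval (P : Polynomial ℤ) (q : ℕ) [NeZero q] (u : ℤ) :
    Function.Periodic (fun k : ℤ => ee ((u : ℝ) / q * (P.eval k : ℤ))) q := fun k => by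
  obtain ⟨n, hn⟩ : (q : ℤ) ∣ P.eval (k + q) - P.eval k := by
    simpa using Polynomial.sub_dvd_eval_sub (k + q) k P
  have hq : (q : ℝ) ≠ 0 := NeZero.ne _
  have hphase : (u : ℝ) / q * (P.eval (k + q) : ℤ) = u / q * (P.eval k : ℤ) + (u * n : ℤ) := by
    rw [eq_add_of_sub_eq' hn]
    push_cast
    field_simp
  simp only [hphase, ee_add, ee_intCast, mul_one]

end PeriodicSequences

theorem stmt9_general {a : ℤ → ℂ} {q : ℕ} [NeZero q] (ha : Function.Periodic a q) {f : ℝ → ℂ}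
    (hp : Function.Periodic f 1) (hf : IntervalIntegrable f volume 0 1) (x : ℝ)
    (hDini : ∀ v < q, DiniAt f (x + v / q)) :
    Tendsto (fun K : ℕ => ∑ k ∈ Icc (-(K : ℤ)) K, unitFourierCoeff f k * (a k * ee (x * k)))
      atTop (𝓝 ((q : ℂ)⁻¹ * ∑ v ∈ range q,
        (∑ w ∈ range q, a w * ee (-(v * w / q))) * f (x + v / q))) := by
  have hterm (v : ℕ) (hv : v ∈ range q) :
      Tendsto (fun K : ℕ => (∑ w ∈ range q, a w * ee (-(v * w / q))) *
        ∑ k ∈ Icc (-(K : ℤ)) K, unitFourierCoeff f k * ee ((x + v / q) * k)) atTop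
        (𝓝 ((∑ w ∈ range q, a w * ee (-(v * w / q))) * f (x + v / q))) :=
    ((hDini v (mem_range.mp hv)).tendsto_sum_unitFourierCoeff hp
      (hp.intervalIntegrable₀ one_ne_zero hf)).const_mul _
  have hlim := tendsto_finsetSum (range q) hterm
  refine (hlim.const_mul (q : ℂ)⁻¹).congr fun K => ?_
  simp only [mul_sum (Icc _ _)]
  rw [sum_comm, mul_sum]
  refine sum_congr rfl fun k _ => ?_
  rw [eq_sum_range_ee_of_periodic ha k, mul_assoc, mul_left_comm, sum_mul]
  congr 1
  rw [mul_sum]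
  refine sum_congr rfl fun v _ => ?_
  rw [add_mul, ee_add, div_mul_eq_mul_div]
  ring

/-- for `f` of class `𝒟` with Fourier coefficients
`c_k = ∫₀¹ f(ξ)e(-kξ)dξ`, and `P` an integer polynomial, at rational time `u/q`
the symmetric partial sums `Σ_{|k|≤K} c_k e((u/q)P(k) + xk)` converge to
`(1/q)Σ_v G(u,v;q) f(x + v/q)`, where `G(u,v;q) = Σ_w e((uP(w) - vw)/q)`. -/
theorem stmt9 (P : Polynomial ℤ) (q : ℕ) (hq : 1 ≤ q) (u : ℤ) (f : ℝ → ℂ)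
    (hf : ClassD f) (x : ℝ) :
    Tendsto
      (fun K : ℕ => ∑ k ∈ Finset.Icc (-(K : ℤ)) (K : ℤ),
        (∫ ξ in (0 : ℝ)..(1 : ℝ), f ξ * ee (-(k : ℝ) * ξ)) *
          ee (((u : ℝ) / (q : ℝ)) * ((P.eval k : ℤ) : ℝ) + x * (k : ℝ)))
      atTop
      (nhds ((q : ℂ)⁻¹ * ∑ v ∈ Finset.range q,
        (∑ w ∈ Finset.range q,
          ee (((u * P.eval (w : ℤ) - (v : ℤ) * (w : ℤ) : ℤ) : ℝ) / (q : ℝ))) *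
          f (x + (v : ℝ) / (q : ℝ)))) := by
  have : NeZero q := ⟨by omega⟩
  simpa only [ee_add, ee_mul_sub_mul_div, unitFourierCoeff, Int.cast_natCast] using
    stmt9_general (periodic_ee_polynomial_eval P q u) hf.1 hf.intervalIntegrable x
      fun v _ => hf.diniAt _
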